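/- Let G be a finite group and let H₁,…,H_r and H'₁,…,H'_s be subgroups of G such that the complex permutation representations ⊕ᵢ ℂ[G/Hᵢ] and ⊕ⱼ ℂ[G/H'ⱼ] are isomorphic as representations of G. Let ρ be a finite-dimensional complex representation of G and let ⟨,⟩₁ and ⟨,⟩₂ be two G-invariant positive-definite Hermitian inner products on ρ. For each subgroup H among the Hᵢ and H'ⱼ fix a basis of ρ^{H}. Then, computing Gram determinants with respect to these fixed bases, ∏ᵢ det((1/|Hᵢ|)⟨,⟩₁ | ρ^{Hᵢ}) / ∏ⱼ det((1/|H'ⱼ|)⟨,⟩₁ | ρ^{H'ⱼ}) = ∏ᵢ det((1/|Hᵢ|)⟨,⟩₂ | ρ^{Hᵢ}) / ∏ⱼ det((1/|H'ⱼ|)⟨,⟩₂ | ρ^{H'ⱼ}). -/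

import Mathlib

/-- The submodule of vectors fixed by every element of a subgroup `H` under a
representation `ρ`. -/
def fixedSubmodule {k G V : Type} [CommRing k] [Group G] [AddCommGroup V] [Module k V]
    (ρ : Representation k G V) (H : Subgroup G) : Submodule k V where
  carrier := {v | ∀ h ∈ H, ρ h v = v}
  add_mem' := by
    intro a b ha hb h hh
    rw [map_add, ha h hh, hb h hh]
  zero_mem' := by
    intro h hh
    rw [map_zero]
  smul_mem' := by
    intro c v hv h hh
    rw [map_smul, hv h hh]

/-!
A nondegenerate invariant form `B₁` represents any other invariant form as `B₂ v w = B₁ v (T w)`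
with `T` a `G`-endomorphism of `V`, so passing from `B₁` to `B₂` multiplies the Gram determinant on
`V^H` by `det (T | V^H)`. Frobenius reciprocity identifies `⨁ᵢ V^{Hᵢ}` with
`Hom_G (⨁ᵢ K[G/Hᵢ], V)`, where `T` acts by postcomposition. Hence `∏ᵢ det (T | V^{Hᵢ})` depends only
on the isomorphism class of the permutation representation, and cancels from the quotient.
-/

section Determinants

theorem det_blockDiagonal' {R ι : Type*} [CommRing R] [Fintype ι] [DecidableEq ι]
    {n : ι → Type*} [∀ i, Fintype (n i)] [∀ i, DecidableEq (n i)]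
    (M : ∀ i, Matrix (n i) (n i) R) :
    (Matrix.blockDiagonal' M).det = ∏ i, (M i).det := by
  classical
  -- The order is arbitrary: a block diagonal matrix is block triangular for any of them.
  let _ : LinearOrder ι := linearOrderOfSTO WellOrderingRel
  rw [(Matrix.blockTriangular_blockDiagonal' M).det_fintype]
  refine Finset.prod_congr rfl fun i _ => ?_
  rw [← Matrix.det_submatrix_equiv_self (Equiv.sigmaSubtype i).symm]
  congr 1
  ext k l
  exact Matrix.blockDiagonal'_apply_eq M i k l

variable {R : Type*} [CommRing R]

theorem toMatrix_piBasis_piMap {ι : Type*} [Fintype ι] [DecidableEq ι] {M : ι → Type*}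
    [∀ i, AddCommGroup (M i)] [∀ i, Module R (M i)]
    {n : ι → Type*} [∀ i, Fintype (n i)] [∀ i, DecidableEq (n i)]
    (b : ∀ i, Module.Basis (n i) R (M i)) (f : ∀ i, Module.End R (M i)) :
    LinearMap.toMatrix (Pi.basis b) (Pi.basis b) (LinearMap.piMap f) =
      Matrix.blockDiagonal' fun i => LinearMap.toMatrix (b i) (b i) (f i) := by
  ext ⟨i, k⟩ ⟨j, l⟩
  rw [LinearMap.toMatrix_apply, Pi.basis_apply, Pi.basis_repr]
  obtain rfl | hij := eq_or_ne i j
  · simp [LinearMap.toMatrix_apply]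
  · simp [Matrix.blockDiagonal'_apply, hij]

theorem det_piMap {ι : Type*} [Fintype ι] {M : ι → Type*}
    [∀ i, AddCommGroup (M i)] [∀ i, Module R (M i)]
    [∀ i, Module.Free R (M i)] [∀ i, Module.Finite R (M i)] (f : ∀ i, Module.End R (M i)) :
    LinearMap.det (LinearMap.piMap f) = ∏ i, LinearMap.det (f i) := by
  classical
  let b i := Module.Free.chooseBasis R (M i)
  rw [← LinearMap.det_toMatrix (Pi.basis b), toMatrix_piBasis_piMap, det_blockDiagonal']
  simp only [LinearMap.det_toMatrix]

theorem det_of_dual_apply_end_basis {M n : Type*} [AddCommGroup M] [Module R M] [Fintype n]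
    [DecidableEq n] (φ : n → Module.Dual R M) (b : Module.Basis n R M) (f : Module.End R M) :
    (Matrix.of fun a c => φ a (f (b c))).det =
      (Matrix.of fun a c => φ a (b c)).det * LinearMap.det f := by
  rw [← LinearMap.det_toMatrix b, ← Matrix.det_mul]
  congr 1
  ext a c
  calc φ a (f (b c)) = φ a (∑ k, b.repr (f (b c)) k • b k) := by rw [b.sum_repr]
    _ = _ := by
      simp only [map_sum, map_smul, smul_eq_mul, Matrix.mul_apply, Matrix.of_apply,
        LinearMap.toMatrix_apply, mul_comm]

end Determinants

section SesquilinearForms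

variable {K V : Type*} [Field K] [AddCommGroup V] [Module K V] {σ : K →+* K}

theorem separatingRight_of_apply_self_ne_zero {B : V →ₛₗ[σ] V →ₗ[K] K}
    (hB : ∀ v, v ≠ 0 → B v v ≠ 0) : B.SeparatingRight :=
  fun w hw => by_contra fun hne => hB w hne (hw w)

theorem det_smul_gram_ne_zero {B : V →ₛₗ[σ] V →ₗ[K] K} (hB : ∀ v, v ≠ 0 → B v v ≠ 0)
    {n : Type*} [Fintype n] [DecidableEq n] {v : n → V} (hv : LinearIndependent K v)
    {m : K} (hm : m ≠ 0) :
    (Matrix.of fun a c => m * B (v a) (v c)).det ≠ 0 := by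
  intro hdet
  obtain ⟨x, hx, hMx⟩ := Matrix.exists_mulVec_eq_zero_iff.mpr hdet
  let w := ∑ c, x c • v c
  have hvw : ∀ a, B (v a) w = 0 := fun a => by
    have h : m * B (v a) w = 0 := by
      simpa [w, Matrix.mulVec, dotProduct, Finset.mul_sum, mul_assoc, mul_comm, mul_left_comm]
        using congrFun hMx a
    exact (mul_eq_zero.mp h).resolve_left hm
  have hww : B w w = 0 :=
    (map_sum (B.flip w) _ _).trans <| Finset.sum_eq_zero fun a _ => by
      rw [map_smulₛₗ, LinearMap.flip_apply, hvw, smul_zero]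
  have hw : w = 0 := by_contra fun hne => hB w hne hww
  exact hx (funext (Fintype.linearIndependent_iff.mp hv x hw))

theorem exists_linearMap_forall_apply_eq [FiniteDimensional K V] {U : Type*} [AddCommGroup U]
    [Module K U] {B₁ : V →ₛₗ[σ] V →ₗ[K] K} (hB₁ : B₁.SeparatingRight)
    (B₂ : V →ₛₗ[σ] U →ₗ[K] K) :
    ∃ T : U →ₗ[K] V, ∀ v u, B₁ v (T u) = B₂ v u := by
  let b := Module.finBasis K V
  let coords : V →ₗ[K] Fin (Module.finrank K V) → K := LinearMap.pi fun i => B₁ (b i)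
  have coords_injective : Function.Injective coords := by
    refine (injective_iff_map_eq_zero _).mpr fun w hw => hB₁ w fun v => ?_
    have hflip : B₁.flip w = 0 := b.ext fun i => congrFun hw i
    exact LinearMap.congr_fun hflip v
  let E := LinearEquiv.ofInjectiveOfFinrankEq coords coords_injective (by simp)
  let T := E.symm.toLinearMap ∘ₗ LinearMap.pi fun i => B₂ (b i)
  refine ⟨T, fun v u => ?_⟩
  have hflip : B₁.flip (T u) = B₂.flip u :=
    b.ext fun i => congrFun (E.apply_symm_apply fun i => B₂ (b i) u) i
  exact LinearMap.congr_fun hflip v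

theorem exists_intertwiningMap_forall_apply_eq [FiniteDimensional K V] {G U : Type*} [Group G]
    [AddCommGroup U] [Module K U] {ρ : Representation K G V} {τ : Representation K G U}
    {B₁ : V →ₛₗ[σ] V →ₗ[K] K} {B₂ : V →ₛₗ[σ] U →ₗ[K] K} (hB₁ : B₁.SeparatingRight)
    (hB₁inv : ∀ g v w, B₁ (ρ g v) (ρ g w) = B₁ v w)
    (hB₂inv : ∀ g v u, B₂ (ρ g v) (τ g u) = B₂ v u) :
    ∃ T : τ.IntertwiningMap ρ, ∀ v u, B₁ v (T u) = B₂ v u := by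
  obtain ⟨T, hT⟩ := exists_linearMap_forall_apply_eq hB₁ B₂
  refine ⟨T.intertwiningMap_of_isIntertwiningMap τ ρ fun g u => sub_eq_zero.mp ?_, hT⟩
  refine hB₁ _ fun v => ?_
  obtain ⟨v, rfl⟩ : ∃ v', ρ g v' = v := ⟨ρ g⁻¹ v, by simp⟩
  rw [map_sub, sub_eq_zero, hT, hB₂inv, hB₁inv, hT]

end SesquilinearForms

section PostcompositionDeterminant

variable {R G V W W' : Type*} [Monoid G]

/-- Equivalent representations have isomorphic spaces of intertwining maps into a third
representation `ρ`, by precomposition with the inverse of the equivalence. -/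
noncomputable def intertwiningMapCongrLeft [CommSemiring R] [AddCommMonoid V] [AddCommMonoid W]
    [AddCommMonoid W'] [Module R V] [Module R W] [Module R W'] {π : Representation R G W}
    {π' : Representation R G W'} (φ : π.Equiv π') (ρ : Representation R G V) :
    π.IntertwiningMap ρ ≃ₗ[R] π'.IntertwiningMap ρ where
  toFun L := L.comp φ.symm.toIntertwiningMap
  invFun L := L.comp φ.toIntertwiningMap
  map_add' L L' := Representation.IntertwiningMap.comp_add _ _ _ L L' _
  map_smul' c L := Representation.IntertwiningMap.smul_comp _ _ _ c L _
  left_inv L := by ext; simp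
  right_inv L := by ext; simp

theorem det_llcomp_congr [CommRing R] [AddCommGroup V] [AddCommMonoid W] [AddCommMonoid W']
    [Module R V] [Module R W] [Module R W'] {π : Representation R G W}
    {π' : Representation R G W'} (φ : π.Equiv π') {ρ : Representation R G V}
    (T : ρ.IntertwiningMap ρ) :
    LinearMap.det (Representation.IntertwiningMap.llcomp π ρ ρ T) =
      LinearMap.det (Representation.IntertwiningMap.llcomp π' ρ ρ T) := by
  rw [← LinearMap.det_conj _ (intertwiningMapCongrLeft φ ρ)]
  congr 1
  ext L w
  simp [intertwiningMapCongrLeft, ← Representation.IntertwiningMap.comp_def]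

end PostcompositionDeterminant

section PermutationRepresentations

variable {R G V X Y : Type*} [Semiring R] [Monoid G] [AddCommMonoid V] [Module R V]
  [MulAction G X] [MulAction G Y] {ρ : Representation R G V}

/-- The intertwining map `R[X] → V` extending a `G`-equivariant map `X → V`. -/
noncomputable def intertwiningMapOfEquivariant (f : X → V)
    (hf : ∀ (g : G) x, f (g • x) = ρ g (f x)) :
    (Representation.ofMulAction R G X).IntertwiningMap ρ where
  toLinearMap := Finsupp.linearCombination R f ∘ₗ (MonoidAlgebra.coeffLinearEquiv R).toLinearMap
  isIntertwining' g := by ext x; simp [hf]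

theorem intertwiningMapOfEquivariant_single {f : X → V}
    (hf : ∀ (g : G) x, f (g • x) = ρ g (f x)) (x : X) :
    intertwiningMapOfEquivariant f hf (MonoidAlgebra.single x 1) = f x := by
  simp [intertwiningMapOfEquivariant, ← Representation.IntertwiningMap.toLinearMap_apply]

theorem intertwiningMap_ofMulAction_ext
    {L L' : (Representation.ofMulAction R G X).IntertwiningMap ρ}
    (h : ∀ x, L (MonoidAlgebra.single x 1) = L' (MonoidAlgebra.single x 1)) : L = L' := by
  ext x
  exact h x

/-- The equivalence of permutation representations whose effect on coefficient vectors is a given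
linear equivalence `e`. -/
noncomputable def ofMulActionEquivOfCoeff (e : (X →₀ R) ≃ₗ[R] (Y →₀ R))
    (he : ∀ g v, e (Representation.ofMulAction R G X g (MonoidAlgebra.ofCoeff v)).coeff =
      (Representation.ofMulAction R G Y g (MonoidAlgebra.ofCoeff (e v))).coeff) :
    (Representation.ofMulAction R G X).Equiv (Representation.ofMulAction R G Y) :=
  .mk (MonoidAlgebra.coeffLinearEquiv R ≪≫ₗ e ≪≫ₗ (MonoidAlgebra.coeffLinearEquiv R).symm)
    fun g => LinearMap.ext fun v => MonoidAlgebra.coeff_injective (he g v.coeff)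

end PermutationRepresentations

section FrobeniusReciprocity

variable {K G V : Type} [CommRing K] [Group G] [AddCommGroup V] [Module K V]
  {ρ : Representation K G V}

theorem intertwiningMap_ofMulAction_single_mem_fixedSubmodule {X : Type*} [MulAction G X]
    (L : (Representation.ofMulAction K G X).IntertwiningMap ρ) {H : Subgroup G} {x : X}
    (hx : ∀ h ∈ H, h • x = x) : L (MonoidAlgebra.single x 1) ∈ fixedSubmodule ρ H := fun h hh => by
  rw [← L.isIntertwining, Representation.ofMulAction_single, hx h hh]

/-- The map `gH ↦ ρ g v` attached to an `H`-fixed vector `v`. -/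
def cosetOrbitMap {H : Subgroup G} (v : fixedSubmodule ρ H) : G ⧸ H → V :=
  Quotient.lift (fun g => ρ g v) fun g g' hgg' => by
    have hfix : ρ (g⁻¹ * g') v = v := v.2 _ (QuotientGroup.leftRel_apply.mp hgg')
    calc ρ g v = ρ g (ρ (g⁻¹ * g') v) := by rw [hfix]
      _ = ρ g' v := by rw [← Module.End.mul_apply, ← map_mul, mul_inv_cancel_left]

theorem cosetOrbitMap_mk {H : Subgroup G} (v : fixedSubmodule ρ H) (g : G) :
    cosetOrbitMap v (g : G ⧸ H) = ρ g v :=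
  rfl

theorem cosetOrbitMap_smul {H : Subgroup G} (v : fixedSubmodule ρ H) (g : G) (x : G ⧸ H) :
    cosetOrbitMap v (g • x) = ρ g (cosetOrbitMap v x) := by
  induction x using QuotientGroup.induction_on with
  | H g' => simp only [MulAction.Quotient.smul_coe, cosetOrbitMap_mk, smul_eq_mul, map_mul,
      Module.End.mul_apply]

/-- Frobenius reciprocity for `⨁ᵢ K[G/Hᵢ]`, encoded as the permutation representation on
`Σ i, G ⧸ H i`: an intertwining map out of it is determined by its values at the base points of the
orbits, which are arbitrary fixed vectors. -/
noncomputable def intertwiningMapEquivPiFixedSubmodule {ι : Type*} (H : ι → Subgroup G)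
    (ρ : Representation K G V) :
    (Representation.ofMulAction K G (Σ i, G ⧸ H i)).IntertwiningMap ρ ≃ₗ[K]
      ∀ i, fixedSubmodule ρ (H i) where
  toFun L i := ⟨L (MonoidAlgebra.single ⟨i, (1 : G)⟩ 1),
    intertwiningMap_ofMulAction_single_mem_fixedSubmodule L fun h hh => by
      have hh' : h⁻¹ * 1 ∈ H i := by rwa [mul_one, inv_mem_iff]
      rw [Sigma.smul_mk, MulAction.Quotient.smul_coe, smul_eq_mul, mul_one,
        QuotientGroup.eq.mpr hh']⟩
  map_add' _ _ := rfl
  map_smul' _ _ := rfl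
  invFun v := intertwiningMapOfEquivariant (fun x => cosetOrbitMap (v x.1) x.2)
    fun g x => cosetOrbitMap_smul (v x.1) g x.2
  left_inv L := intertwiningMap_ofMulAction_ext fun ⟨i, x⟩ => by
    induction x using QuotientGroup.induction_on with
    | H g =>
      refine (intertwiningMapOfEquivariant_single _ _).trans ?_
      rw [cosetOrbitMap_mk, ← L.isIntertwining, Representation.ofMulAction_single, Sigma.smul_mk,
        MulAction.Quotient.smul_coe, smul_eq_mul, mul_one]
  right_inv v := funext fun i => Subtype.ext <|
    (intertwiningMapOfEquivariant_single _ _).trans <| by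
      rw [cosetOrbitMap_mk, map_one, Module.End.one_apply]

/-- The map on `H`-fixed vectors induced by an intertwining map. -/
def fixedSubmoduleMap {W : Type} [AddCommGroup W] [Module K W] {τ : Representation K G W}
    (T : ρ.IntertwiningMap τ) (H : Subgroup G) : fixedSubmodule ρ H →ₗ[K] fixedSubmodule τ H :=
  T.toLinearMap.restrict fun v hv h hh => by
    rw [T.toLinearMap_apply, ← T.isIntertwining, hv h hh]

theorem intertwiningMapEquivPiFixedSubmodule_llcomp {ι : Type*} (H : ι → Subgroup G)
    {W : Type} [AddCommGroup W] [Module K W] {τ : Representation K G W} (T : ρ.IntertwiningMap τ)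
    (L : (Representation.ofMulAction K G (Σ i, G ⧸ H i)).IntertwiningMap ρ) :
    intertwiningMapEquivPiFixedSubmodule H τ (Representation.IntertwiningMap.llcomp _ ρ τ T L) =
      LinearMap.piMap (fun i => fixedSubmoduleMap T (H i))
        (intertwiningMapEquivPiFixedSubmodule H ρ L) :=
  rfl

theorem prod_det_fixedSubmoduleMap_eq_det_llcomp {ι : Type*} [Fintype ι] (H : ι → Subgroup G)
    [∀ i, Module.Free K (fixedSubmodule ρ (H i))] [∀ i, Module.Finite K (fixedSubmodule ρ (H i))]
    (T : ρ.IntertwiningMap ρ) :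
    ∏ i, LinearMap.det (fixedSubmoduleMap T (H i)) =
      LinearMap.det (Representation.IntertwiningMap.llcomp
        (Representation.ofMulAction K G (Σ i, G ⧸ H i)) ρ ρ T) := by
  rw [← det_piMap, ← LinearMap.det_conj _ (intertwiningMapEquivPiFixedSubmodule H ρ)]
  congr 1
  refine LinearMap.ext fun v => ?_
  obtain ⟨L, rfl⟩ := (intertwiningMapEquivPiFixedSubmodule H ρ).surjective v
  simp only [LinearMap.comp_apply, LinearEquiv.coe_coe, LinearEquiv.symm_apply_apply,
    intertwiningMapEquivPiFixedSubmodule_llcomp]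

theorem prod_det_fixedSubmoduleMap_congr {ι κ : Type*} [Fintype ι] [Fintype κ]
    {H : ι → Subgroup G} {H' : κ → Subgroup G}
    [∀ i, Module.Free K (fixedSubmodule ρ (H i))] [∀ i, Module.Finite K (fixedSubmodule ρ (H i))]
    [∀ j, Module.Free K (fixedSubmodule ρ (H' j))] [∀ j, Module.Finite K (fixedSubmodule ρ (H' j))]
    (φ : (Representation.ofMulAction K G (Σ i, G ⧸ H i)).Equiv
      (Representation.ofMulAction K G (Σ j, G ⧸ H' j)))
    (T : ρ.IntertwiningMap ρ) :
    ∏ i, LinearMap.det (fixedSubmoduleMap T (H i)) =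
      ∏ j, LinearMap.det (fixedSubmoduleMap T (H' j)) := by
  rw [prod_det_fixedSubmoduleMap_eq_det_llcomp, prod_det_fixedSubmoduleMap_eq_det_llcomp,
    det_llcomp_congr φ]

end FrobeniusReciprocity

section GramDeterminants

variable {K G V : Type} [Group G] [AddCommGroup V]

theorem prod_det_gram_eq_mul_prod_det [CommRing K] [Module K V] {ρ : Representation K G V}
    {σ : K →+* K} {B₁ B₂ : V →ₛₗ[σ] V →ₗ[K] K} {T : ρ.IntertwiningMap ρ}
    (hT : ∀ v w, B₁ v (T w) = B₂ v w) {ι : Type*} [Fintype ι] (H : ι → Subgroup G) (m : ι → K)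
    {n : ι → Type*} [∀ i, Fintype (n i)] [∀ i, DecidableEq (n i)]
    (b : ∀ i, Module.Basis (n i) K (fixedSubmodule ρ (H i))) :
    ∏ i, (Matrix.of fun a c => m i * B₂ (b i a : V) (b i c : V)).det =
      (∏ i, (Matrix.of fun a c => m i * B₁ (b i a : V) (b i c : V)).det) *
        ∏ i, LinearMap.det (fixedSubmoduleMap T (H i)) := by
  rw [← Finset.prod_mul_distrib]
  refine Finset.prod_congr rfl fun i _ => ?_
  simp only [← hT]
  exact det_of_dual_apply_end_basis
    (fun a => m i • (B₁ (b i a : V)).comp (fixedSubmodule ρ (H i)).subtype) (b i)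
    (fixedSubmoduleMap T (H i))

variable [Field K] [Module K V] [FiniteDimensional K V] {ι κ : Type*} [Fintype ι] [Fintype κ]
  {H : ι → Subgroup G} {H' : κ → Subgroup G}
  {ρ : Representation K G V} {σ : K →+* K} {B₁ B₂ : V →ₛₗ[σ] V →ₗ[K] K}
  {n : ι → Type*} {n' : κ → Type*}
  [∀ i, Fintype (n i)] [∀ i, DecidableEq (n i)] [∀ j, Fintype (n' j)] [∀ j, DecidableEq (n' j)]

theorem prod_det_gram_mul_prod_det_gram_comm
    (φ : (Representation.ofMulAction K G (Σ i, G ⧸ H i)).Equiv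
      (Representation.ofMulAction K G (Σ j, G ⧸ H' j)))
    (hB₁ : B₁.SeparatingRight)
    (hB₁inv : ∀ g v w, B₁ (ρ g v) (ρ g w) = B₁ v w)
    (hB₂inv : ∀ g v w, B₂ (ρ g v) (ρ g w) = B₂ v w) (m : ι → K) (m' : κ → K)
    (b : ∀ i, Module.Basis (n i) K (fixedSubmodule ρ (H i)))
    (b' : ∀ j, Module.Basis (n' j) K (fixedSubmodule ρ (H' j))) :
    (∏ i, (Matrix.of fun a c => m i * B₁ (b i a : V) (b i c : V)).det) *
        (∏ j, (Matrix.of fun a c => m' j * B₂ (b' j a : V) (b' j c : V)).det) =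
      (∏ i, (Matrix.of fun a c => m i * B₂ (b i a : V) (b i c : V)).det) *
        (∏ j, (Matrix.of fun a c => m' j * B₁ (b' j a : V) (b' j c : V)).det) := by
  obtain ⟨T, hT⟩ := exists_intertwiningMap_forall_apply_eq hB₁ hB₁inv hB₂inv
  rw [prod_det_gram_eq_mul_prod_det hT H m b, prod_det_gram_eq_mul_prod_det hT H' m' b',
    prod_det_fixedSubmoduleMap_congr φ T]
  ring

theorem gram_det_quotient_indep_of_innerProduct_general
    (φ : (Representation.ofMulAction K G (Σ i, G ⧸ H i)).Equiv
      (Representation.ofMulAction K G (Σ j, G ⧸ H' j)))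
    (hB₁ : ∀ v, v ≠ 0 → B₁ v v ≠ 0) (hB₂ : ∀ v, v ≠ 0 → B₂ v v ≠ 0)
    (hB₁inv : ∀ g v w, B₁ (ρ g v) (ρ g w) = B₁ v w)
    (hB₂inv : ∀ g v w, B₂ (ρ g v) (ρ g w) = B₂ v w)
    (m : ι → K) {m' : κ → K} (hm' : ∀ j, m' j ≠ 0)
    (b : ∀ i, Module.Basis (n i) K (fixedSubmodule ρ (H i)))
    (b' : ∀ j, Module.Basis (n' j) K (fixedSubmodule ρ (H' j))) :
    (∏ i, (Matrix.of fun a c => m i * B₁ (b i a : V) (b i c : V)).det) /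
        (∏ j, (Matrix.of fun a c => m' j * B₁ (b' j a : V) (b' j c : V)).det) =
      (∏ i, (Matrix.of fun a c => m i * B₂ (b i a : V) (b i c : V)).det) /
        (∏ j, (Matrix.of fun a c => m' j * B₂ (b' j a : V) (b' j c : V)).det) := by
  have b'_linearIndependent : ∀ j, LinearIndependent K fun a => (b' j a : V) := fun j =>
    (b' j).linearIndependent.map' _ (Submodule.ker_subtype _)
  have denominator_ne_zero : ∀ B : V →ₛₗ[σ] V →ₗ[K] K, (∀ v, v ≠ 0 → B v v ≠ 0) →
      ∏ j, (Matrix.of fun a c => m' j * B (b' j a : V) (b' j c : V)).det ≠ 0 := fun B hB =>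
    Finset.prod_ne_zero_iff.mpr fun j _ => det_smul_gram_ne_zero hB (b'_linearIndependent j) (hm' j)
  exact (div_eq_div_iff (denominator_ne_zero B₁ hB₁) (denominator_ne_zero B₂ hB₂)).mpr <|
    prod_det_gram_mul_prod_det_gram_comm φ (separatingRight_of_apply_self_ne_zero hB₁)
      hB₁inv hB₂inv m m' b b'

end GramDeterminants

/-- Given a relation `⊕ᵢ ℂ[G/Hᵢ] ≅ ⊕ⱼ ℂ[G/H'ⱼ]` of complex permutation representations of a
finite group `G`, a complex representation `ρ` with two `G`-invariant positive-definite
Hermitian inner products `B₁`, `B₂`, and fixed bases of the fixed subspaces `ρ^{H}`, the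
quotient `∏ᵢ det((1/|Hᵢ|)B|ρ^{Hᵢ}) / ∏ⱼ det((1/|H'ⱼ|)B|ρ^{H'ⱼ})` of Gram determinants is the
same for `B = B₁` and `B = B₂`. -/
theorem gram_det_quotient_indep_of_innerProduct
    {G : Type} [Group G] [Fintype G]
    {r s : ℕ} (H : Fin r → Subgroup G) (H' : Fin s → Subgroup G)
    (e : ((Σ i : Fin r, G ⧸ H i) →₀ ℂ) ≃ₗ[ℂ] ((Σ j : Fin s, G ⧸ H' j) →₀ ℂ))
    (he : ∀ (g : G) (v : (Σ i : Fin r, G ⧸ H i) →₀ ℂ),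
      e (Representation.ofMulAction ℂ G (Σ i : Fin r, G ⧸ H i) g (MonoidAlgebra.ofCoeff v)).coeff =
        (Representation.ofMulAction ℂ G (Σ j : Fin s, G ⧸ H' j) g (MonoidAlgebra.ofCoeff (e v))).coeff)
    {V : Type} [AddCommGroup V] [Module ℂ V] [FiniteDimensional ℂ V]
    (ρ : Representation ℂ G V)
    (B₁ B₂ : V →ₗ⋆[ℂ] V →ₗ[ℂ] ℂ)
    (hB₁inv : ∀ (g : G) (v w : V), B₁ (ρ g v) (ρ g w) = B₁ v w)
    (hB₁herm : ∀ v w : V, B₁ v w = starRingEnd ℂ (B₁ w v))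
    (hB₁pos : ∀ v : V, v ≠ 0 → 0 < (B₁ v v).re)
    (hB₂inv : ∀ (g : G) (v w : V), B₂ (ρ g v) (ρ g w) = B₂ v w)
    (hB₂herm : ∀ v w : V, B₂ v w = starRingEnd ℂ (B₂ w v))
    (hB₂pos : ∀ v : V, v ≠ 0 → 0 < (B₂ v v).re)
    (d : Fin r → ℕ) (d' : Fin s → ℕ)
    (b : ∀ i, Module.Basis (Fin (d i)) ℂ (fixedSubmodule ρ (H i)))
    (b' : ∀ j, Module.Basis (Fin (d' j)) ℂ (fixedSubmodule ρ (H' j))) :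
    (∏ i, (Matrix.of fun a c : Fin (d i) =>
        ((Nat.card (H i) : ℂ))⁻¹ * B₁ (b i a : V) (b i c : V)).det) /
      (∏ j, (Matrix.of fun a c : Fin (d' j) =>
        ((Nat.card (H' j) : ℂ))⁻¹ * B₁ (b' j a : V) (b' j c : V)).det) =
    (∏ i, (Matrix.of fun a c : Fin (d i) =>
        ((Nat.card (H i) : ℂ))⁻¹ * B₂ (b i a : V) (b i c : V)).det) /
      (∏ j, (Matrix.of fun a c : Fin (d' j) =>
        ((Nat.card (H' j) : ℂ))⁻¹ * B₂ (b' j a : V) (b' j c : V)).det) :=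
  gram_det_quotient_indep_of_innerProduct_general (ofMulActionEquivOfCoeff e he)
    (fun v hv h => (hB₁pos v hv).ne' (by rw [h, Complex.zero_re]))
    (fun v hv h => (hB₂pos v hv).ne' (by rw [h, Complex.zero_re]))
    hB₁inv hB₂inv _ (fun _ => inv_ne_zero (Nat.cast_ne_zero.mpr Nat.card_pos.ne')) b b'
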